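/- Let H be a complex Hilbert space and let T be a bounded linear operator on H. Then T is centered (i.e. the operators in the family {T^n(T^n)* : n ≥ 1} ∪ {(T^n)*T^n : n ≥ 1} mutually commute) if and only if |T^n| commutes with |(T^m)*| for all m, n ≥ 1. -/

import Mathlib

set_option synthInstance.maxHeartbeats 1000000
set_option maxHeartbeats 1000000

open ContinuousLinearMap

/-- `opAbs T = |T| = (T*T)^(1/2)`, the positive square root of `T*T` obtained by the
continuous functional calculus. -/
noncomputable def opAbs {H : Type*} [NormedAddCommGroup H] [InnerProductSpace ℂ H]
    [CompleteSpace H] (T : H →L[ℂ] H) : H →L[ℂ] H :=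
  CFC.sqrt (adjoint T * T)

/-- An operator `T` is centered if the operators in the family
`{T^n (T^n)* : n ≥ 1} ∪ {(T^n)* T^n : n ≥ 1}` mutually commute. -/
def Centered {H : Type*} [NormedAddCommGroup H] [InnerProductSpace ℂ H]
    [CompleteSpace H] (T : H →L[ℂ] H) : Prop :=
  ∀ m n : ℕ, 1 ≤ m → 1 ≤ n →
    Commute (T ^ m * adjoint (T ^ m)) (T ^ n * adjoint (T ^ n)) ∧
    Commute (adjoint (T ^ m) * T ^ m) (adjoint (T ^ n) * T ^ n) ∧
    Commute (T ^ m * adjoint (T ^ m)) (adjoint (T ^ n) * T ^ n)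

lemma opAbs_mul_self {H : Type*} [NormedAddCommGroup H] [InnerProductSpace ℂ H]
    [CompleteSpace H] (T : H →L[ℂ] H) : opAbs T * opAbs T = adjoint T * T := by
  unfold opAbs
  apply CFC.sqrt_mul_sqrt_self
  rw [← ContinuousLinearMap.star_eq_adjoint]
  exact star_mul_self_nonneg T

lemma commute_opAbs {H : Type*} [NormedAddCommGroup H] [InnerProductSpace ℂ H]
    [CompleteSpace H] (S T : H →L[ℂ] H) :
    Commute (opAbs S) (opAbs T) ↔ Commute (adjoint S * S) (adjoint T * T) := by
  constructor
  · intro h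
    rw [← opAbs_mul_self, ← opAbs_mul_self]
    exact (h.mul_left h).mul_right (h.mul_left h)
  · intro h
    unfold opAbs CFC.sqrt
    exact ((h.cfcₙ_nnreal _).symm.cfcₙ_nnreal _).symm

lemma commute_aux {M : Type*} [Monoid M] [StarMul M] (T : M) (m k : ℕ)
    (h : Commute (T ^ m * star (T ^ m)) (star (T ^ k) * T ^ k)) :
    Commute (star (T ^ m) * T ^ m) (star (T ^ (k + m)) * T ^ (k + m)) := by
  have h' := h.eq
  rw [pow_add, star_mul]
  generalize T ^ m = S at *
  generalize T ^ k = R at *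
  show _ = _
  calc star S * S * (star S * star R * (R * S))
      = star S * (S * star S * (star R * R)) * S := by simp only [mul_assoc]
    _ = star S * (star R * R * (S * star S)) * S := by rw [h']
    _ = _ := by simp only [mul_assoc]

lemma commute_all {M : Type*} [Monoid M] [StarMul M] (T : M)
    (h : ∀ m n : ℕ, 1 ≤ m → 1 ≤ n → Commute (T ^ m * star (T ^ m)) (star (T ^ n) * T ^ n))
    (m n : ℕ) (hm : 1 ≤ m) (hn : 1 ≤ n) :
    Commute (star (T ^ m) * T ^ m) (star (T ^ n) * T ^ n) := by
  rcases lt_trichotomy m n with hlt | rfl | hlt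
  · have := commute_aux T m (n - m) (h _ _ hm (by omega))
    rwa [Nat.sub_add_cancel hlt.le] at this
  · exact Commute.refl _
  · have := commute_aux T n (m - n) (h _ _ hn (by omega))
    rw [Nat.sub_add_cancel hlt.le] at this
    exact this.symm

/-- `T` is centered if and only if `|T^n|` commutes with `|(T^m)*|` for all `m, n ≥ 1`. -/
theorem stmt_15 {H : Type*} [NormedAddCommGroup H] [InnerProductSpace ℂ H] [CompleteSpace H]
    (T : H →L[ℂ] H) :
    Centered T ↔
      ∀ m n : ℕ, 1 ≤ m → 1 ≤ n →
        Commute (opAbs (T ^ n)) (opAbs (adjoint (T ^ m))) := by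
  simp only [commute_opAbs, Centered, ← ContinuousLinearMap.star_eq_adjoint, star_star]
  constructor
  · intro h m n hm hn
    exact (h m n hm hn).2.2.symm
  · intro h m n hm hn
    refine ⟨?_, commute_all T (fun m n hm hn => (h m n hm hn).symm) m n hm hn,
      (h m n hm hn).symm⟩
    have := commute_all (star T) (fun m n hm hn => by
      simpa only [← star_pow, star_star] using h n m hn hm) m n hm hn
    simpa only [← star_pow, star_star] using this
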